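/- arXiv:1111.0030 — 7 statements merged into one kernel-verified Lean document; each statement's English description precedes it below -/
import Mathlib

section
/- Let R be a commutative ring, M an R-module, X : M → M an R-linear map, G ∈ M and μ ∈ R such that X(X(G)) = μ • G. Then for all a, b ∈ R and every natural number m ≥ 1, ((a • id + b • X)^m)(G) = P_m • G + D_m • X(G), where P_m = Σ_{k=0}^{⌊m/2⌋} C(m,2k) · a^{m-2k} · b^{2k} · μ^k and D_m = Σ_{k=0}^{⌊(m-1)/2⌋} C(m,2k+1) · a^{m-2k-1} · b^{2k+1} · μ^k, with C(m,j) the binomial coefficients. -/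
theorem aux_split {A : Type*} [AddCommMonoid A] (f : ℕ → A) (N : ℕ) :
    ∑ j ∈ Finset.range (2 * N), f j
      = ∑ k ∈ Finset.range N, f (2 * k) + ∑ k ∈ Finset.range N, f (2 * k + 1) := by
  induction N with
  | zero => simp
  | succ n ih =>
    rw [show 2 * (n + 1) = 2 * n + 1 + 1 by ring, Finset.sum_range_succ, Finset.sum_range_succ, ih,
      Finset.sum_range_succ, Finset.sum_range_succ]
    abel

theorem aux_pow {R : Type*} [CommRing R] {M : Type*} [AddCommGroup M] [Module R M]
    (X : M →ₗ[R] M) (G : M) (μ : R) (h : X (X G) = μ • G) (k : ℕ) :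
    (X ^ (2 * k)) G = μ ^ k • G := by
  induction k with
  | zero => simp
  | succ n ih =>
    rw [show 2 * (n + 1) = 2 * n + 1 + 1 by ring, pow_succ, pow_succ, Module.End.mul_apply,
      Module.End.mul_apply, h, map_smul, ih, smul_smul, pow_succ, mul_comm]

theorem aux_ext {A : Type*} [AddCommMonoid A] (f : ℕ → A) {n N : ℕ} (hn : n ≤ N)
    (hf : ∀ k, n ≤ k → f k = 0) :
    ∑ k ∈ Finset.range n, f k = ∑ k ∈ Finset.range N, f k := by
  apply Finset.sum_subset
  · intro k hk
    simp only [Finset.mem_range] at *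
    omega
  · intro k _ hk
    apply hf
    simpa using hk

/-- Theorem 2 of the paper (explicit expression of `U^m(G) = P_m G + D_m X(G)`). -/
theorem stmt_1 {R : Type*} [CommRing R] {M : Type*} [AddCommGroup M] [Module R M]
    (X : M →ₗ[R] M) (G : M) (μ a b : R) (h : X (X G) = μ • G)
    (m : ℕ) (hm : 1 ≤ m) :
    ((a • (LinearMap.id : M →ₗ[R] M) + b • X) ^ m) G =
      (∑ k ∈ Finset.range (m / 2 + 1),
          (m.choose (2 * k) : R) * a ^ (m - 2 * k) * b ^ (2 * k) * μ ^ k) • G +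
      (∑ k ∈ Finset.range ((m - 1) / 2 + 1),
          (m.choose (2 * k + 1) : R) * a ^ (m - 2 * k - 1) * b ^ (2 * k + 1) * μ ^ k) • X G := by
  have hc : Commute (b • X) (a • (LinearMap.id : M →ₗ[R] M)) := by
    ext v
    simp [smul_smul, mul_comm]
  have hp : ∀ n : ℕ, (a • (LinearMap.id : M →ₗ[R] M)) ^ n = a ^ n • LinearMap.id := by
    intro n
    rw [smul_pow]
    congr 1
    exact one_pow n
  have h1 : ((a • (LinearMap.id : M →ₗ[R] M) + b • X) ^ m) G =
      ∑ j ∈ Finset.range (m + 1),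
        ((m.choose j : R) * a ^ (m - j) * b ^ j) • (X ^ j) G := by
    rw [add_comm, hc.add_pow, LinearMap.sum_apply]
    apply Finset.sum_congr rfl
    intro j _
    rw [hp, smul_pow, ← nsmul_eq_mul', ← Nat.cast_smul_eq_nsmul R]
    simp only [LinearMap.smul_apply, Module.End.mul_apply, LinearMap.id_apply, map_smul, smul_smul]
    congr 1
    ring
  rw [h1, aux_ext _ (show m + 1 ≤ 2 * (m + 1) by omega), aux_split,
    aux_ext _ (show m / 2 + 1 ≤ m + 1 by omega),
    aux_ext _ (show (m - 1) / 2 + 1 ≤ m + 1 by omega), Finset.sum_smul, Finset.sum_smul]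
  · congr 1
    · apply Finset.sum_congr rfl
      intro k _
      rw [aux_pow X G μ h, smul_smul]
    · apply Finset.sum_congr rfl
      intro k _
      rw [pow_succ' X, Module.End.mul_apply, aux_pow X G μ h, map_smul, smul_smul, Nat.sub_sub]
  · intro k hk
    rw [Nat.choose_eq_zero_of_lt (by omega)]
    simp
  · intro k hk
    rw [Nat.choose_eq_zero_of_lt (by omega)]
    simp
  · intro k hk
    rw [Nat.choose_eq_zero_of_lt (by omega)]
    simp
end

section
/- Let κ > 0, c ≠ 0, let I ⊆ ℝ be an open interval, and let γ : ℝ → ℝ be differentiable on I with γ'(u) = -c·(γ(u)² + κ) for all u ∈ I. Then there exists u₀ ∈ ℝ such that for all u ∈ I one has sin(√κ(cu+u₀)) ≠ 0 and γ(u)·sin(√κ(cu+u₀)) = √κ·cos(√κ(cu+u₀)). -/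
open Real in
/-- Uniqueness: every solution of the Riccati equation `γ' + c(γ² + κ) = 0`
with `κ > 0` on an open interval is `γ(u) = √κ·cot(√κ(cu+u₀))` for some `u₀`. -/
theorem stmt_5 (κ c : ℝ) (hκ : 0 < κ) (hc : c ≠ 0)
    (I : Set ℝ) (hI : IsOpen I) (hconv : Convex ℝ I)
    (γ : ℝ → ℝ) (hγ : ∀ u ∈ I, HasDerivAt γ (-c * ((γ u) ^ 2 + κ)) u) :
    ∃ u₀ : ℝ, ∀ u ∈ I, sin (sqrt κ * (c * u + u₀)) ≠ 0 ∧
      γ u * sin (sqrt κ * (c * u + u₀)) = sqrt κ * cos (sqrt κ * (c * u + u₀)) := by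
  rcases I.eq_empty_or_nonempty with rfl | ⟨x₀, hx₀⟩
  · exact ⟨0, by simp⟩
  have hs : 0 < sqrt κ := Real.sqrt_pos.mpr hκ
  have hsq : sqrt κ ^ 2 = κ := Real.sq_sqrt hκ.le
  generalize sqrt κ = s at hs hsq ⊢
  subst hsq
  have hs0 : s ≠ 0 := hs.ne'
  have hF : ∀ u ∈ I, HasDerivAt (fun u => arctan (γ u / s) + s * c * u) 0 u := by
    intro u hu
    have h1 := (((hγ u hu).div_const s).arctan).add ((hasDerivAt_id u).const_mul (s * c))
    refine h1.congr_deriv ?_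
    have : s ^ 2 + γ u ^ 2 ≠ 0 := by positivity
    have h2 : 1 + (γ u / s) ^ 2 = (s ^ 2 + γ u ^ 2) / s ^ 2 := by field_simp
    rw [h2]
    field_simp
    ring
  have hconst : ∀ u ∈ I, arctan (γ u / s) + s * c * u = arctan (γ x₀ / s) + s * c * x₀ := by
    intro u hu
    exact hI.is_const_of_deriv_eq_zero hconv.isPreconnected
      (fun v hv => (hF v hv).differentiableAt.differentiableWithinAt)
      (fun v hv => (hF v hv).deriv) hu hx₀
  refine ⟨(π / 2 - (arctan (γ x₀ / s) + s * c * x₀)) / s, fun u hu => ?_⟩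
  have harg : s * (c * u + (π / 2 - (arctan (γ x₀ / s) + s * c * x₀)) / s)
      = π / 2 - arctan (γ u / s) := by
    rw [← hconst u hu]
    field_simp
    ring
  rw [harg, sin_pi_div_two_sub, cos_pi_div_two_sub]
  have hcos := cos_arctan_pos (γ u / s)
  refine ⟨hcos.ne', ?_⟩
  have ht := tan_arctan (γ u / s)
  rw [tan_eq_sin_div_cos, div_eq_div_iff hcos.ne' hs0] at ht
  linarith
end

section
/- Let A be a commutative ℝ-algebra, let X and Y be ℝ-linear derivations of A (ℝ-linear maps satisfying the Leibniz rule D(ab) = a·D(b) + b·D(a)) with X∘Y = Y∘X, and let f₁, f₂, f₃ ∈ A satisfy X(f₁) = X(f₂) = X(f₃) = 0. Define the ℝ-linear operators U, P : A → A by U(g) = f₁·g + f₂·X(g) and P(g) = Y(g) + f₃·X(g). Then the double commutator [[P,U],U] is the zero operator, where [S,T] := S∘T - T∘S. -/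
/-- Second commutator computation: `[[P,U],U] = 0`. -/
theorem stmt_8 {A : Type*} [CommRing A] [Algebra ℝ A]
    (X Y : A →ₗ[ℝ] A)
    (hX : ∀ a b : A, X (a * b) = a * X b + b * X a)
    (hY : ∀ a b : A, Y (a * b) = a * Y b + b * Y a)
    (hXY : ∀ a : A, X (Y a) = Y (X a))
    (f₁ f₂ f₃ : A) (h1 : X f₁ = 0) (h2 : X f₂ = 0) (h3 : X f₃ = 0)
    (U P : A → A)
    (hU : ∀ g, U g = f₁ * g + f₂ * X g)
    (hP : ∀ g, P g = Y g + f₃ * X g) :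
    ∀ g, (P (U (U g)) - U (P (U g))) - U (P (U g) - U (P g)) = 0 := by
  intro g
  have e1 : X (Y f₁) = 0 := by rw [hXY, h1, map_zero]
  have e2 : X (Y f₂) = 0 := by rw [hXY, h2, map_zero]
  have key : ∀ g, P (U g) - U (P g) = Y f₁ * g + Y f₂ * X g := by
    intro g
    simp only [hU, hP, map_add, hX, hY, h1, h2, h3, hXY]
    ring
  rw [key (U g), key g]
  simp only [hU, map_add, hX, h1, h2, e1, e2]
  ring
end

section
/- Let A be a commutative ℝ-algebra, let X and Y be ℝ-linear derivations of A (ℝ-linear maps satisfying the Leibniz rule D(ab) = a·D(b) + b·D(a)) with X∘Y = Y∘X, and let f₁, f₂, f₃ ∈ A satisfy X(f₁) = X(f₂) = X(f₃) = 0. Define the ℝ-linear operators U, P : A → A by U(g) = f₁·g + f₂·X(g) and P(g) = Y(g) + f₃·X(g). Let m ≥ 1 be a natural number and G ∈ A. If f₁·Y(G) + (m•Y(f₂) + f₁·f₃)·X(G) + f₂·X(Y(G)) + f₂·f₃·X(X(G)) = -(m•Y(f₁))·G, then P(U^m(G)) = 0, where U^m denotes the m-fold composite of U. -/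
/-- Sufficiency part of the final Proposition of Section 2: the displayed
condition on `G` guarantees `P(Uᵐ G) = 0`. -/
theorem stmt_9 {A : Type*} [CommRing A] [Algebra ℝ A]
    (X Y : A →ₗ[ℝ] A)
    (hX : ∀ a b : A, X (a * b) = a * X b + b * X a)
    (hY : ∀ a b : A, Y (a * b) = a * Y b + b * Y a)
    (hXY : ∀ a : A, X (Y a) = Y (X a))
    (f₁ f₂ f₃ : A) (h1 : X f₁ = 0) (h2 : X f₂ = 0) (h3 : X f₃ = 0)
    (U P : A → A)
    (hU : ∀ g, U g = f₁ * g + f₂ * X g)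
    (hP : ∀ g, P g = Y g + f₃ * X g)
    (m : ℕ) (hm : 1 ≤ m) (G : A)
    (hG : f₁ * Y G + (m • Y f₂ + f₁ * f₃) * X G + f₂ * X (Y G) + f₂ * f₃ * X (X G)
        = -(m • Y f₁) * G) :
    P (U^[m] G) = 0 := by
  have y1 : X (Y f₁) = 0 := by rw [hXY, h1, map_zero]
  have y2 : X (Y f₂) = 0 := by rw [hXY, h2, map_zero]
  have key : ∀ (n : ℕ) (g : A), P (U^[n+1] g)
      = U^[n] (U (P g) + ((n : A) + 1) * (Y f₁ * g + Y f₂ * X g)) := by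
    intro n
    induction n with
    | zero =>
      intro g
      simp only [zero_add, Function.iterate_one, Function.iterate_zero, id, hU, hP, map_add, hX, hY,
        h1, h2, h3, hXY, Nat.cast_zero]
      ring
    | succ n ih =>
      intro g
      have hc : X ((n : A) + 1 + 1) = 0 := by
        have x1 : X 1 = 0 := by
          have := hX 1 1
          simpa using this
        have : ((n : A) + 1 + 1) = (n + 2 : ℕ) • (1 : A) := by
          rw [nsmul_eq_mul]; push_cast; ring
        rw [this, map_nsmul, x1, smul_zero]
      rw [Function.iterate_succ_apply U (n+1), ih, Function.iterate_succ_apply U n]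
      congr 1
      push_cast
      simp only [hU, hP, map_add, hX, hY, h1, h2, h3, y1, y2, hc, ← hXY, map_zero]
      ring
  obtain ⟨n, rfl⟩ : ∃ n, m = n + 1 := ⟨m - 1, by omega⟩
  rw [key]
  have hz : U (P G) + ((n : A) + 1) * (Y f₁ * G + Y f₂ * X G) = 0 := by
    simp only [nsmul_eq_mul] at hG
    push_cast at hG
    simp only [hU, hP, map_add, hX, h3]
    linear_combination hG
  rw [hz]
  exact Function.iterate_fixed (by rw [hU]; simp) n
end

section
/- Fix a₁, a₂ ∈ ℝ and let F : ℝ → ℝ be differentiable. Define G(θ,φ) = (a₁·sin φ + a₂·cos φ)·sin θ and V(θ,φ) = F((a₁·cos φ - a₂·sin φ)·tan θ) / cos²θ. Then for all (θ,φ) ∈ ℝ² with cos θ ≠ 0 and sin θ ≠ 0, one has ∂V/∂θ·∂G/∂θ + (1/sin²θ)·∂V/∂φ·∂G/∂φ = 2·V·G. -/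
open Real in
/-- The potentials `V = F((a₁cos φ - a₂sin φ)tan θ)/cos²θ` satisfy the conformal
condition `∇ⁱV ∇ᵢG = 2VG` on the round two-sphere for `G = (a₁sin φ + a₂cos φ)sin θ`. -/
theorem stmt_11 (a₁ a₂ : ℝ) (F : ℝ → ℝ) (hF : Differentiable ℝ F)
    (G V : ℝ → ℝ → ℝ)
    (hG : ∀ θ φ, G θ φ = (a₁ * sin φ + a₂ * cos φ) * sin θ)
    (hV : ∀ θ φ, V θ φ = F ((a₁ * cos φ - a₂ * sin φ) * tan θ) / (cos θ) ^ 2) :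
    ∀ θ φ, cos θ ≠ 0 → sin θ ≠ 0 →
      deriv (fun t => V t φ) θ * deriv (fun t => G t φ) θ
        + (1 / (sin θ) ^ 2) * deriv (fun s => V θ s) φ * deriv (fun s => G θ s) φ
        = 2 * V θ φ * G θ φ := by
  intro θ φ hc hs
  have e1 : (fun t => V t φ) = fun t => F ((a₁ * cos φ - a₂ * sin φ) * tan t) / (cos t) ^ 2 :=
    funext fun t => hV t φ
  have e2 : (fun s => V θ s) = fun s => F ((a₁ * cos s - a₂ * sin s) * tan θ) / (cos θ) ^ 2 :=
    funext fun s => hV θ s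
  have e3 : (fun t => G t φ) = fun t => (a₁ * sin φ + a₂ * cos φ) * sin t :=
    funext fun t => hG t φ
  have e4 : (fun s => G θ s) = fun s => (a₁ * sin s + a₂ * cos s) * sin θ :=
    funext fun s => hG θ s
  have hFd := (hF ((a₁ * cos φ - a₂ * sin φ) * tan θ)).hasDerivAt
  have d1 := (HasDerivAt.comp θ hFd
    ((hasDerivAt_tan hc).const_mul (a₁ * cos φ - a₂ * sin φ))).fun_div
    ((hasDerivAt_cos θ).fun_pow 2) (pow_ne_zero 2 hc)
  have d2 := (HasDerivAt.comp φ hFd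
    ((((hasDerivAt_cos φ).const_mul a₁).fun_sub
      ((hasDerivAt_sin φ).const_mul a₂)).mul_const (tan θ))).div_const (cos θ ^ 2)
  have d3 := (hasDerivAt_sin θ).const_mul (a₁ * sin φ + a₂ * cos φ)
  have d4 := ((((hasDerivAt_sin φ).const_mul a₁).fun_add
      ((hasDerivAt_cos φ).const_mul a₂)).mul_const (sin θ))
  simp only [Function.comp_def] at d1 d2
  rw [e1, e2, e3, e4, d1.deriv, d2.deriv, d3.deriv, d4.deriv, hV, hG]
  generalize deriv F ((a₁ * cos φ - a₂ * sin φ) * tan θ) = F'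
  generalize F ((a₁ * cos φ - a₂ * sin φ) * tan θ) = F0
  rw [tan_eq_sin_div_cos]
  field_simp
  ring
end

section
/- Let F₀ ∈ ℝ. On the open set Ω = {(u,θ,φ,p_u,p_θ,p_φ) ∈ ℝ⁶ : u ≠ 0, sin θ ≠ 0, cos θ ≠ 0} define H = ½p_u² + (4/u²)·(½(p_θ² + p_φ²/sin²θ) + F₀/cos²θ) and T = sin φ·sin θ·(p_u² - (4/u²)p_θ² - 8F₀/(u²cos²θ)) + (4/u)·p_θ·p_u·cos θ·sin φ + (4/u)·p_φ·p_u·cos φ/sin θ - (4/u²)·p_φ²·sin φ/sin θ. Then the canonical Poisson bracket {H,T} := (∂H/∂p_u·∂T/∂u - ∂H/∂u·∂T/∂p_u) + (∂H/∂p_θ·∂T/∂θ - ∂H/∂θ·∂T/∂p_θ) + (∂H/∂p_φ·∂T/∂φ - ∂H/∂φ·∂T/∂p_φ) vanishes identically on Ω. -/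
open Real in
/-- The explicit first integral `T = U²G₁` of the extended Hamiltonian `H`
(first Example of the paper): the canonical Poisson bracket `{H,T}` vanishes. -/
theorem stmt_13 (F₀ : ℝ) (H T : ℝ → ℝ → ℝ → ℝ → ℝ → ℝ → ℝ)
    (hH : ∀ u θ φ pu pθ pφ, H u θ φ pu pθ pφ =
      (1 / 2) * pu ^ 2 + (4 / u ^ 2) *
        ((1 / 2) * (pθ ^ 2 + pφ ^ 2 / (sin θ) ^ 2) + F₀ / (cos θ) ^ 2))
    (hT : ∀ u θ φ pu pθ pφ, T u θ φ pu pθ pφ =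
      sin φ * sin θ * (pu ^ 2 - (4 / u ^ 2) * pθ ^ 2 - 8 * F₀ / (u ^ 2 * (cos θ) ^ 2))
        + (4 / u) * pθ * pu * cos θ * sin φ
        + (4 / u) * pφ * pu * cos φ / sin θ
        - (4 / u ^ 2) * pφ ^ 2 * sin φ / sin θ) :
    ∀ u θ φ pu pθ pφ, u ≠ 0 → sin θ ≠ 0 → cos θ ≠ 0 →
      (deriv (fun x => H u θ φ x pθ pφ) pu * deriv (fun x => T x θ φ pu pθ pφ) u
        - deriv (fun x => H x θ φ pu pθ pφ) u * deriv (fun x => T u θ φ x pθ pφ) pu)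
      + (deriv (fun x => H u θ φ pu x pφ) pθ * deriv (fun x => T u x φ pu pθ pφ) θ
        - deriv (fun x => H u x φ pu pθ pφ) θ * deriv (fun x => T u θ φ pu x pφ) pθ)
      + (deriv (fun x => H u θ φ pu pθ x) pφ * deriv (fun x => T u θ x pu pθ pφ) φ
        - deriv (fun x => H u θ x pu pθ pφ) φ * deriv (fun x => T u θ φ pu pθ x) pφ)
      = 0 := by
  intro u θ φ pu pθ pφ hu hs hc
  have hq : ∀ a b c x : ℝ, HasDerivAt (fun x : ℝ => a * x ^ 2 + b * x + c) (2 * a * x + b) x := by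
    intro a b c x
    have h := (((hasDerivAt_pow 2 x).const_mul a).fun_add ((hasDerivAt_id x).const_mul b)).add_const c
    exact h.congr_deriv (by norm_num; ring)
  have hi : ∀ a b c x : ℝ, x ≠ 0 →
      HasDerivAt (fun x : ℝ => a * (x⁻¹) ^ 2 + b * x⁻¹ + c)
        ((2 * a * x⁻¹ + b) * (-(x ^ 2)⁻¹)) x := by
    intro a b c x hx
    exact (hq a b c x⁻¹).comp x (hasDerivAt_inv hx)
  have hS := Real.hasDerivAt_sin
  have hC := Real.hasDerivAt_cos
  have hSi : HasDerivAt (fun x => (sin x)⁻¹) (-cos θ / sin θ ^ 2) θ := (hS θ).inv hs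
  have hCi : HasDerivAt (fun x => (cos x)⁻¹) (-(-sin θ) / cos θ ^ 2) θ := (hC θ).inv hc
  have e1 := hq (1/2) 0 ((4 / u ^ 2) *
        ((1 / 2) * (pθ ^ 2 + pφ ^ 2 / (sin θ) ^ 2) + F₀ / (cos θ) ^ 2)) pu
  replace e1 : HasDerivAt (fun x => H u θ φ x pθ pφ) _ pu :=
    e1.congr_of_eventuallyEq (.of_forall fun x => by simp only [hH]; ring)
  have e2 := hi (sin φ * sin θ * (-4 * pθ ^ 2 - 8 * F₀ / (cos θ) ^ 2) - 4 * pφ ^ 2 * sin φ / sin θ)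
    (4 * pθ * pu * cos θ * sin φ + 4 * pφ * pu * cos φ / sin θ) (sin φ * sin θ * pu ^ 2) u hu
  replace e2 : HasDerivAt (fun x => T x θ φ pu pθ pφ) _ u :=
    e2.congr_of_eventuallyEq (.of_forall fun x => by simp only [hT]; ring)
  have e3 := hi (4 * ((1 / 2) * (pθ ^ 2 + pφ ^ 2 / (sin θ) ^ 2) + F₀ / (cos θ) ^ 2)) 0
    ((1/2) * pu ^ 2) u hu
  replace e3 : HasDerivAt (fun x => H x θ φ pu pθ pφ) _ u :=
    e3.congr_of_eventuallyEq (.of_forall fun x => by simp only [hH]; ring)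
  have e4 := hq (sin φ * sin θ) ((4 / u) * pθ * cos θ * sin φ + (4 / u) * pφ * cos φ / sin θ)
    (sin φ * sin θ * (- (4 / u ^ 2) * pθ ^ 2 - 8 * F₀ / (u ^ 2 * (cos θ) ^ 2))
      - (4 / u ^ 2) * pφ ^ 2 * sin φ / sin θ) pu
  replace e4 : HasDerivAt (fun x => T u θ φ x pθ pφ) _ pu :=
    e4.congr_of_eventuallyEq (.of_forall fun x => by simp only [hT]; ring)
  have e5 := hq (2 / u ^ 2) 0 ((1 / 2) * pu ^ 2 + (4 / u ^ 2) *
        ((1 / 2) * (pφ ^ 2 / (sin θ) ^ 2) + F₀ / (cos θ) ^ 2)) pθ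
  replace e5 : HasDerivAt (fun x => H u θ φ pu x pφ) _ pθ :=
    e5.congr_of_eventuallyEq (.of_forall fun x => by simp only [hH]; ring)
  have e8 := hq (-(4 / u ^ 2) * sin φ * sin θ) ((4 / u) * pu * cos θ * sin φ)
    (sin φ * sin θ * (pu ^ 2 - 8 * F₀ / (u ^ 2 * (cos θ) ^ 2))
        + (4 / u) * pφ * pu * cos φ / sin θ
        - (4 / u ^ 2) * pφ ^ 2 * sin φ / sin θ) pθ
  replace e8 : HasDerivAt (fun x => T u θ φ pu x pφ) _ pθ :=
    e8.congr_of_eventuallyEq (.of_forall fun x => by simp only [hT]; ring)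
  have e9 := hq (2 / u ^ 2 / (sin θ) ^ 2) 0 ((1 / 2) * pu ^ 2 + (4 / u ^ 2) *
        ((1 / 2) * pθ ^ 2 + F₀ / (cos θ) ^ 2)) pφ
  replace e9 : HasDerivAt (fun x => H u θ φ pu pθ x) _ pφ :=
    e9.congr_of_eventuallyEq (.of_forall fun x => by simp only [hH]; ring)
  have e12 := hq (-(4 / u ^ 2) * sin φ / sin θ) ((4 / u) * pu * cos φ / sin θ)
    (sin φ * sin θ * (pu ^ 2 - (4 / u ^ 2) * pθ ^ 2 - 8 * F₀ / (u ^ 2 * (cos θ) ^ 2))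
        + (4 / u) * pθ * pu * cos θ * sin φ) pφ
  replace e12 : HasDerivAt (fun x => T u θ φ pu pθ x) _ pφ :=
    e12.congr_of_eventuallyEq (.of_forall fun x => by simp only [hT]; ring)
  have e11 : deriv (fun x => H u θ x pu pθ pφ) φ = 0 := by
    simp only [hH]; exact deriv_const _ _
  have e10 := ((hS φ).mul_const (sin θ * (pu ^ 2 - (4 / u ^ 2) * pθ ^ 2
      - 8 * F₀ / (u ^ 2 * (cos θ) ^ 2)) + (4 / u) * pθ * pu * cos θ
      - (4 / u ^ 2) * pφ ^ 2 / sin θ)).fun_add ((hC φ).mul_const ((4 / u) * pφ * pu / sin θ))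
  replace e10 : HasDerivAt (fun x => T u θ x pu pθ pφ) _ φ :=
    e10.congr_of_eventuallyEq (.of_forall fun x => by simp only [hT]; ring)
  have e7 := (((hSi.fun_pow 2).const_mul (2 / u ^ 2 * pφ ^ 2)).fun_add
    ((hCi.fun_pow 2).const_mul (4 / u ^ 2 * F₀))).add_const ((1/2) * pu ^ 2 + 2 / u ^ 2 * pθ ^ 2)
  replace e7 : HasDerivAt (fun x => H u x φ pu pθ pφ) _ θ :=
    e7.congr_of_eventuallyEq (.of_forall fun x => by simp only [hH]; ring)
  have e6 := ((((hS θ).mul_const (sin φ * (pu ^ 2 - (4 / u ^ 2) * pθ ^ 2))).fun_add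
    (((hS θ).fun_mul (hCi.fun_pow 2)).mul_const (-8 * F₀ * sin φ / u ^ 2))).fun_add
    ((hC θ).mul_const ((4 / u) * pθ * pu * sin φ))).fun_add
    (hSi.mul_const ((4 / u) * pφ * pu * cos φ - (4 / u ^ 2) * pφ ^ 2 * sin φ))
  replace e6 : HasDerivAt (fun x => T u x φ pu pθ pφ) _ θ :=
    e6.congr_of_eventuallyEq (.of_forall fun x => by simp only [hT]; ring)
  rw [e1.deriv, e2.deriv, e3.deriv, e4.deriv, e5.deriv, e6.deriv, e7.deriv, e8.deriv, e9.deriv,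
    e10.deriv, e11, e12.deriv]
  have hp : cos θ ^ 2 = 1 - sin θ ^ 2 := Real.cos_sq' θ
  clear e1 e2 e3 e4 e5 e6 e7 e8 e9 e10 e11 e12 hSi hCi hS hC hi hq
  generalize sin θ = s at *
  generalize cos θ = c at *
  generalize sin φ = S at *
  generalize cos φ = C at *
  have hp' : s ^ 2 = 1 - c ^ 2 := by linarith
  norm_num
  field_simp
  ring_nf
  grind
end

section
/- Let n be a positive integer, ℏ, K ∈ ℝ, let f : ℝ → ℝ be smooth with f(u) ≠ 0 for all u, let V : ℝⁿ → ℝ be smooth, and let ψ : ℝ × ℝⁿ → ℝ be smooth. Define the operator L̂ by (L̂ψ)(u,q) = -(ℏ²/2)·Σ_{i=1}^{n} ∂²ψ/∂q_i²(u,q) + V(q)·ψ(u,q), and the operator Ĥ by (Ĥψ)(u,q) = -(ℏ²/2)·(∂²ψ/∂u²(u,q) + n·(f'(u)/f(u))·∂ψ/∂u(u,q)) + (K/f(u)²)·(L̂ψ)(u,q). Then Ĥ(L̂ψ) = L̂(Ĥψ), i.e. the operators Ĥ and L̂ commute on smooth functions. -/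
/-- The flat Laplacian of `ψ` in the variables `q : Fin n → ℝ`. -/
noncomputable def flatLaplacian (n : ℕ) (ψ : (Fin n → ℝ) → ℝ) (q : Fin n → ℝ) : ℝ :=
  ∑ i : Fin n, deriv (deriv (fun t => ψ (Function.update q i t))) (q i)

/-- The quantum Hamiltonian `L̂ = -(ℏ²/2)Δ + V` of the base, acting on
functions `ψ(u,q)` (with `u` a parameter). -/
noncomputable def Lhat (n : ℕ) (ℏ : ℝ) (V : (Fin n → ℝ) → ℝ)
    (ψ : ℝ → (Fin n → ℝ) → ℝ) : ℝ → (Fin n → ℝ) → ℝ :=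
  fun u q => -(ℏ ^ 2 / 2) * flatLaplacian n (ψ u) q + V q * ψ u q

/-- The quantum Hamiltonian `Ĥ = -(ℏ²/2)(∂_u² + n(f'/f)∂_u) + (K/f²)L̂` of the
extended manifold. -/
noncomputable def Hhat (n : ℕ) (ℏ K : ℝ) (f : ℝ → ℝ) (V : (Fin n → ℝ) → ℝ)
    (ψ : ℝ → (Fin n → ℝ) → ℝ) : ℝ → (Fin n → ℝ) → ℝ :=
  fun u q => -(ℏ ^ 2 / 2) *
      (deriv (deriv (fun t => ψ t q)) u
        + (n : ℝ) * (deriv f u / f u) * deriv (fun t => ψ t q) u)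
    + (K / (f u) ^ 2) * Lhat n ℏ V ψ u q

namespace Aux14

abbrev E (n : ℕ) := ℝ × (Fin n → ℝ)

abbrev S {n : ℕ} (g : E n → ℝ) : Prop := ContDiff ℝ (⊤ : ℕ∞) g

noncomputable def D {n : ℕ} (v : E n) (g : E n → ℝ) : E n → ℝ := fun p => fderiv ℝ g p v

lemma S.diff {n : ℕ} {g : E n → ℝ} (h : S g) : Differentiable ℝ g :=
  ContDiff.differentiable h (by simp)

lemma S.D {n : ℕ} {g : E n → ℝ} (h : S g) (v : E n) : S (D v g) := by
  have : ContDiff ℝ (⊤ : ℕ∞) (fderiv ℝ g) := ContDiff.fderiv_right (m := (⊤ : ℕ∞)) h (by simp)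
  exact this.clm_apply contDiff_const

lemma D_comm {n : ℕ} {g : E n → ℝ} (h : S g) (v w : E n) : D v (D w g) = D w (D v g) := by
  have h1 : ContDiff ℝ (⊤ : ℕ∞) (fderiv ℝ g) := ContDiff.fderiv_right (m := (⊤ : ℕ∞)) h (by simp)
  have h2 : Differentiable ℝ (fderiv ℝ g) := h1.differentiable (by simp)
  funext p
  have hs : IsSymmSndFDerivAt ℝ g p :=
    ContDiffAt.isSymmSndFDerivAt (n := (⊤ : ℕ∞)) h.contDiffAt
      (by simp only [minSmoothness_of_isRCLikeNormedField]; exact WithTop.coe_le_coe.2 (le_top : (2 : ℕ∞) ≤ ⊤))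
  have key : ∀ a b : E n, D a (D b g) p = fderiv ℝ (fderiv ℝ g) p a b := by
    intro a b
    unfold D
    rw [fderiv_clm_apply (h2 p) (differentiableAt_const b)]
    simp
  rw [key, key]
  exact hs v w

lemma D_add {n : ℕ} {g k : E n → ℝ} (hg : S g) (hk : S k) (v : E n) :
    D v (fun p => g p + k p) = fun p => D v g p + D v k p := by
  funext p
  unfold D
  rw [fderiv_fun_add (hg.diff p) (hk.diff p)]
  rfl

lemma D_mul {n : ℕ} {b g : E n → ℝ} (hb : S b) (hg : S g) (v : E n) (h0 : ∀ p, D v b p = 0) :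
    D v (fun p => b p * g p) = fun p => b p * D v g p := by
  funext p
  have := h0 p
  unfold D at *
  rw [fderiv_fun_mul (hb.diff p) (hg.diff p)]
  simp [this]

lemma D_sum {n : ℕ} {g : Fin n → E n → ℝ} (hg : ∀ i, S (g i)) (v : E n) :
    D v (fun p => ∑ i, g i p) = fun p => ∑ i, D v (g i) p := by
  funext p
  unfold D
  rw [fderiv_fun_sum (fun i _ => (hg i).diff p)]
  simp

abbrev e0 (n : ℕ) : E n := (1, 0)
abbrev ei {n : ℕ} (i : Fin n) : E n := (0, Pi.single i 1)

lemma deriv_u {n : ℕ} {g : E n → ℝ} (h : S g) (q : Fin n → ℝ) :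
    deriv (fun t => g (t, q)) = fun t => D (e0 n) g (t, q) := by
  funext t
  have h1 : HasDerivAt (fun t : ℝ => ((t, q) : E n)) (e0 n) t :=
    (hasDerivAt_id t).prodMk (hasDerivAt_const t q)
  exact ((h.diff (t, q)).hasFDerivAt.comp_hasDerivAt t h1).deriv

lemma deriv_q {n : ℕ} {g : E n → ℝ} (h : S g) (u : ℝ) (q : Fin n → ℝ) (i : Fin n) :
    deriv (fun t => g (u, Function.update q i t)) =
      fun t => D (ei i) g (u, Function.update q i t) := by
  funext t
  have h1 : HasDerivAt (fun t : ℝ => ((u, Function.update q i t) : E n)) (ei i) t :=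
    (hasDerivAt_const t u).prodMk (hasDerivAt_update q i t)
  exact ((h.diff (u, Function.update q i t)).hasFDerivAt.comp_hasDerivAt t h1).deriv

lemma S_fst {n : ℕ} {b : ℝ → ℝ} (hb : ContDiff ℝ (⊤ : ℕ∞) b) : S (fun p : E n => b p.1) :=
  hb.comp contDiff_fst

lemma S_snd {n : ℕ} {V : (Fin n → ℝ) → ℝ} (hb : ContDiff ℝ (⊤ : ℕ∞) V) :
    S (fun p : E n => V p.2) :=
  hb.comp contDiff_snd

lemma D_fst {n : ℕ} {b : ℝ → ℝ} (hb : ContDiff ℝ (⊤ : ℕ∞) b) (i : Fin n) (p : E n) :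
    D (ei i) (fun p : E n => b p.1) p = 0 := by
  have h1 := (((hb.differentiable (by simp)) p.1).hasFDerivAt.comp p
    (hasFDerivAt_fst (𝕜 := ℝ) (E := ℝ) (F := Fin n → ℝ) (p := p))).fderiv
  unfold D
  change fderiv ℝ (b ∘ Prod.fst) p _ = 0
  rw [h1]
  simp

lemma D_snd {n : ℕ} {V : (Fin n → ℝ) → ℝ} (hb : ContDiff ℝ (⊤ : ℕ∞) V) (p : E n) :
    D (e0 n) (fun p : E n => V p.2) p = 0 := by
  have h1 := (((hb.differentiable (by simp)) p.2).hasFDerivAt.comp p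
    (hasFDerivAt_snd (𝕜 := ℝ) (E := ℝ) (F := Fin n → ℝ) (p := p))).fderiv
  unfold D
  change fderiv ℝ (V ∘ Prod.snd) p _ = 0
  rw [h1]
  simp

/-- Uncurried `L̂`. -/
noncomputable def L {n : ℕ} (c : ℝ) (V : (Fin n → ℝ) → ℝ) (g : E n → ℝ) : E n → ℝ :=
  fun p => c * (∑ i, D (ei i) (D (ei i) g) p) + V p.2 * g p

section
variable {n : ℕ} {c : ℝ} {V : (Fin n → ℝ) → ℝ} {g k : E n → ℝ}

lemma S_sum (hg : S g) : S (fun p => ∑ i, D (ei i) (D (ei i) g) p) :=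
  ContDiff.sum (fun i _ => (hg.D (ei i)).D (ei i))

lemma S_L (hV : ContDiff ℝ (⊤ : ℕ∞) V) (hg : S g) : S (L c V g) :=
  (contDiff_const.mul (S_sum hg)).add ((S_snd hV).mul hg)

lemma L_add (hg : S g) (hk : S k) :
    L c V (fun p => g p + k p) = fun p => L c V g p + L c V k p := by
  funext p
  have : ∀ i : Fin n, D (ei i) (D (ei i) (fun p => g p + k p)) p
      = D (ei i) (D (ei i) g) p + D (ei i) (D (ei i) k) p := by
    intro i
    rw [D_add hg hk, D_add (hg.D _) (hk.D _)]
  simp only [L, this, Finset.sum_add_distrib]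
  ring

lemma L_mul {b : ℝ → ℝ} (hb : ContDiff ℝ (⊤ : ℕ∞) b) (hg : S g) :
    L c V (fun p => b p.1 * g p) = fun p => b p.1 * L c V g p := by
  funext p
  have : ∀ i : Fin n, D (ei i) (D (ei i) (fun p => b p.1 * g p)) p
      = b p.1 * D (ei i) (D (ei i) g) p := by
    intro i
    rw [D_mul (S_fst hb) hg _ (D_fst hb i), D_mul (S_fst hb) (hg.D _) _ (D_fst hb i)]
  simp only [L, this, ← Finset.mul_sum]
  ring

lemma D_L (hV : ContDiff ℝ (⊤ : ℕ∞) V) (hg : S g) :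
    D (e0 n) (L c V g) = L c V (D (e0 n) g) := by
  unfold L
  have hc : ContDiff ℝ (⊤ : ℕ∞) (fun _ : E n => c) := contDiff_const
  rw [D_add (hc.mul (S_sum hg)) ((S_snd hV).mul hg),
    D_mul hc (S_sum hg) _ (fun p => by simp [D]),
    D_mul (S_snd hV) hg _ (D_snd hV), D_sum (fun i => (hg.D _).D _)]
  funext p
  have : ∀ i : Fin n, D (e0 n) (D (ei i) (D (ei i) g)) = D (ei i) (D (ei i) (D (e0 n) g)) := by
    intro i
    rw [D_comm (hg.D _), D_comm hg]
  simp only [this]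

end

lemma Lhat_eq {n : ℕ} (ℏ : ℝ) (V : (Fin n → ℝ) → ℝ) {g : E n → ℝ} (hg : S g) :
    Lhat n ℏ V (fun u q => g (u, q)) = fun u q => L (-(ℏ ^ 2 / 2)) V g (u, q) := by
  funext u q
  simp only [Lhat, flatLaplacian, L, deriv_q hg, deriv_q (hg.D _), Function.update_eq_self]

lemma Hhat_eq {n : ℕ} (ℏ K : ℝ) (f : ℝ → ℝ) (V : (Fin n → ℝ) → ℝ) {g : E n → ℝ} (hg : S g) :
    Hhat n ℏ K f V (fun u q => g (u, q)) = fun u q =>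
      (fun p : E n => (-(ℏ ^ 2 / 2)) * (D (e0 n) (D (e0 n) g) p
        + (n : ℝ) * (deriv f p.1 / f p.1) * D (e0 n) g p)
        + (K / (f p.1) ^ 2) * L (-(ℏ ^ 2 / 2)) V g p) (u, q) := by
  funext u q
  simp only [Hhat, Lhat_eq ℏ V hg, deriv_u hg, deriv_u (hg.D _)]

end Aux14

/-- Proposition of Section 5: `L̂` is a symmetry operator of `Ĥ`, i.e.
`[Ĥ, L̂] = 0` on smooth functions. -/
theorem stmt_14 (n : ℕ) (hn : 1 ≤ n) (ℏ K : ℝ) (f : ℝ → ℝ)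
    (hf : ContDiff ℝ (⊤ : ℕ∞) f) (hf0 : ∀ u, f u ≠ 0)
    (V : (Fin n → ℝ) → ℝ) (hV : ContDiff ℝ (⊤ : ℕ∞) V)
    (ψ : ℝ → (Fin n → ℝ) → ℝ)
    (hψ : ContDiff ℝ (⊤ : ℕ∞) (fun p : ℝ × (Fin n → ℝ) => ψ p.1 p.2)) :
    Hhat n ℏ K f V (Lhat n ℏ V ψ) = Lhat n ℏ V (Hhat n ℏ K f V ψ) := by
  obtain ⟨g, rfl⟩ : ∃ g : Aux14.E n → ℝ, ψ = fun u q => g (u, q) :=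
    ⟨fun p => ψ p.1 p.2, rfl⟩
  have hg : Aux14.S g := hψ
  have hdf : ContDiff ℝ (⊤ : ℕ∞) (deriv f) := (contDiff_infty_iff_deriv.1 hf).2
  have ha : ContDiff ℝ (⊤ : ℕ∞) (fun u => (n : ℝ) * (deriv f u / f u)) :=
    contDiff_const.mul (hdf.div hf hf0)
  have hb : ContDiff ℝ (⊤ : ℕ∞) (fun u => K / (f u) ^ 2) :=
    contDiff_const.div (hf.pow 2) (fun u => pow_ne_zero 2 (hf0 u))
  have hc : ContDiff ℝ (⊤ : ℕ∞) (fun _ : ℝ => -(ℏ ^ 2 / 2)) := contDiff_const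
  have hD := hg.D (Aux14.e0 n)
  have hDD := hD.D (Aux14.e0 n)
  have hL : Aux14.S (Aux14.L (-(ℏ ^ 2 / 2)) V g) := Aux14.S_L hV hg
  have h1 := (Aux14.S_fst (n := n) ha).mul hD
  have h2 := hDD.add h1
  have h3 := (Aux14.S_fst (n := n) hc).mul h2
  have h4 := (Aux14.S_fst (n := n) hb).mul hL
  rw [Aux14.Lhat_eq ℏ V hg, Aux14.Hhat_eq ℏ K f V hL, Aux14.Hhat_eq ℏ K f V hg,
    Aux14.Lhat_eq ℏ V (h3.add h4), Aux14.L_add h3 h4, Aux14.L_mul hc h2, Aux14.L_mul hb hL,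
    Aux14.L_add hDD h1, Aux14.L_mul ha hD, Aux14.D_L hV hg, Aux14.D_L hV hD]
end
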